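/- arXiv:1905.10119 — 2 statements merged into one kernel-verified Lean document; each statement's English description precedes it below -/
import Mathlib

section
/- Let C be a complete regular category (a regular category with all small limits) and let X be an object with global support. If X has the finite strict refinement property, then X has the strict refinement property for arbitrary small families: for any small index types I and J and any two product diagrams (f_i : X → A_i)_{i∈I} and (g_j : X → B_j)_{j∈J}, there exist objects C_{i,j} and morphisms α_{i,j} : A_i → C_{i,j}, β_{i,j} : B_j → C_{i,j} with α_{i,j}∘f_i = β_{i,j}∘g_j for all i, j, such that for each i the family (α_{i,j})_{j∈J} is a product diagram and for each j the family (β_{i,j})_{i∈I} is a product diagram. -/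
open CategoryTheory CategoryTheory.Limits

universe v u

variable {C : Type u} [Category.{v} C]

/-- `(p, q)` is a binary product diagram, exhibiting `X` as the product of `A` and `B`. -/
def IsBinaryProduct {X A B : C} (p : X ⟶ A) (q : X ⟶ B) : Prop :=
  Nonempty (IsLimit (BinaryFan.mk p q))

/-- `p : X ⟶ A` is a product projection. -/
def IsProductProjection {X A : C} (p : X ⟶ A) : Prop :=
  ∃ (B : C) (q : X ⟶ B), IsBinaryProduct p q

/-- A pushout square whose two legs belong to the class `M`. -/
def IsMPushout (M : MorphismProperty C) {Z A B P : C}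
    (f : Z ⟶ A) (g : Z ⟶ B) (a : A ⟶ P) (b : B ⟶ P) : Prop :=
  IsPushout f g a b ∧ M a ∧ M b

/-- `X` is an `M`-coextensive object. -/
structure MCoextensive (M : MorphismProperty C) (X : C) : Prop where
  pushout_exists : ∀ ⦃Y A : C⦄ (m : X ⟶ Y) (p : X ⟶ A), M m → IsProductProjection p →
    ∃ (P : C) (a : A ⟶ P) (b : Y ⟶ P), IsMPushout M p m a b
  isBinaryProduct_iff : ∀ ⦃A₁ A₂ Y B₁ B₂ : C⦄ (π₁ : X ⟶ A₁) (π₂ : X ⟶ A₂)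
    (f : X ⟶ Y) (p₁ : A₁ ⟶ B₁) (p₂ : A₂ ⟶ B₂) (π₁' : Y ⟶ B₁) (π₂' : Y ⟶ B₂),
    IsBinaryProduct π₁ π₂ → M f → M p₁ → M p₂ →
    π₁ ≫ p₁ = f ≫ π₁' → π₂ ≫ p₂ = f ≫ π₂' →
    (IsBinaryProduct π₁' π₂' ↔ (IsMPushout M π₁ f p₁ π₁' ∧ IsMPushout M π₂ f p₂ π₂'))

/-- The class of product projections. -/
def projections (C : Type u) [Category.{v} C] : MorphismProperty C :=
  fun _ _ f => IsProductProjection f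

/-- `X` is projection-coextensive. -/
def ProjectionCoextensive (X : C) : Prop := MCoextensive (projections C) X

/-- `f` is a regular epimorphism (a coequalizer of some parallel pair). -/
def IsRegularEpimorphism {X Y : C} (f : X ⟶ Y) : Prop :=
  ∃ (W : C) (a b : W ⟶ X) (h : a ≫ f = b ≫ f), Nonempty (IsColimit (Cofork.ofπ f h))

/-- The class of regular epimorphisms. -/
def regularEpis (C : Type u) [Category.{v} C] : MorphismProperty C :=
  fun _ _ f => IsRegularEpimorphism f

/-- `X` is regularly-coextensive. -/
def RegularlyCoextensive (X : C) : Prop := MCoextensive (regularEpis C) X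

/-- A regular category: finitely complete, coequalizers of kernel pairs, and
regular epimorphisms are stable under pullback. -/
class IsRegularCategory (C : Type u) [Category.{v} C] [HasFiniteLimits C] : Prop where
  hasCoequalizer_kernelPair : ∀ {X Y : C} (f : X ⟶ Y),
    HasCoequalizer (pullback.fst f f) (pullback.snd f f)
  regularEpi_stable : ∀ {X Y Z : C} (f : X ⟶ Y) (g : Z ⟶ Y),
    IsRegularEpimorphism f → IsRegularEpimorphism (pullback.snd f g)

/-- `X` has global support: the unique morphism to the terminal object is a regular epi. -/
def HasGlobalSupport [HasTerminal C] (X : C) : Prop :=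
  IsRegularEpimorphism (terminal.from X)

/-- `X` has the finite strict refinement property. -/
def HasFiniteStrictRefinement {C : Type u} [Category.{v} C] (X : C) : Prop :=
  ∀ (I J : Type) (_ : Finite I) (_ : Finite J) (A : I → C) (B : J → C)
    (f : ∀ i, X ⟶ A i) (g : ∀ j, X ⟶ B j),
    Nonempty (IsLimit (Fan.mk X f)) → Nonempty (IsLimit (Fan.mk X g)) →
    ∃ (D : I → J → C) (α : ∀ i j, A i ⟶ D i j) (β : ∀ i j, B j ⟶ D i j),
      (∀ i j, f i ≫ α i j = g j ≫ β i j) ∧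
      (∀ i, Nonempty (IsLimit (Fan.mk (A i) (fun j => α i j)))) ∧
      (∀ j, Nonempty (IsLimit (Fan.mk (B j) (fun i => β i j))))

/-! Fix `i` and complete `f i` to a binary decomposition `X = A i × A'`, and likewise each `g j` to
`X = B j × B' j`. Refining these two decompositions for every `j` splits each `B j` as
`D i j × E i j`, so that `X` is the product of `∏ D i j` and `∏ E i j`, both over `j`. The first of
these projections factors through `A i` and the second through `A'`, so the isomorphism
`A i × A' ≅ ∏ D i j × ∏ E i j` is the product of two morphisms. Global support allows one to cancel
the second factor: a morphism into `A i` can be paired, after passing to a cover of its domain,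
with a morphism into `A'`. Hence `A i ⟶ ∏ D i j` is itself an isomorphism. -/

universe w

namespace IsBinaryProduct

variable {X A B : C} {p : X ⟶ A} {q : X ⟶ B}

theorem exists_lift (h : IsBinaryProduct p q) {T : C} (a : T ⟶ A) (b : T ⟶ B) :
    ∃ t : T ⟶ X, t ≫ p = a ∧ t ≫ q = b :=
  let ⟨t, ht⟩ := BinaryFan.IsLimit.lift' h.some a b
  ⟨t, ht⟩

theorem hom_ext (h : IsBinaryProduct p q) {T : C} {s t : T ⟶ X}
    (hp : s ≫ p = t ≫ p) (hq : s ≫ q = t ≫ q) : s = t :=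
  BinaryFan.IsLimit.hom_ext h.some hp hq

theorem of_exists_lift_of_hom_ext
    (exists_lift : ∀ ⦃T : C⦄ (a : T ⟶ A) (b : T ⟶ B), ∃ t : T ⟶ X, t ≫ p = a ∧ t ≫ q = b)
    (hom_ext : ∀ ⦃T : C⦄ (s t : T ⟶ X), s ≫ p = t ≫ p → s ≫ q = t ≫ q → s = t) :
    IsBinaryProduct p q := by
  choose lift lift_fst lift_snd using fun s : BinaryFan A B ↦ exists_lift s.fst s.snd
  exact ⟨BinaryFan.isLimitMk lift lift_fst lift_snd fun s m hp hq ↦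
    hom_ext _ _ (hp.trans (lift_fst s).symm) (hq.trans (lift_snd s).symm)⟩

end IsBinaryProduct

theorem isBinaryProduct_iff_isLimit_fan_bool {X : C} {A : Bool → C} (f : ∀ b, X ⟶ A b) :
    IsBinaryProduct (f false) (f true) ↔ Nonempty (IsLimit (Fan.mk X f)) := by
  constructor
  · intro h
    choose lift lift_fst lift_snd using fun s : Fan A ↦ h.exists_lift (s.proj false) (s.proj true)
    exact ⟨Fan.IsLimit.mk _ lift (fun s ↦ Bool.rec (lift_fst s) (lift_snd s)) fun s m hm ↦
      h.hom_ext ((hm false).trans (lift_fst s).symm) ((hm true).trans (lift_snd s).symm)⟩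
  · rintro ⟨h⟩
    refine .of_exists_lift_of_hom_ext (fun T a b ↦ ?_) fun T s t hs ht ↦
      Fan.IsLimit.hom_ext h s t (Bool.rec hs ht)
    let l : ∀ c, T ⟶ A c := Bool.rec a b
    exact ⟨Fan.IsLimit.lift h l, Fan.IsLimit.fac h l false, Fan.IsLimit.fac h l true⟩

theorem isBinaryProduct_proj_piLift_ne {I : Type*} {X : C} {A : I → C} {f : ∀ i, X ⟶ A i}
    (hf : IsLimit (Fan.mk X f)) (i : I) [HasProduct fun k : {k // k ≠ i} ↦ A k] :
    IsBinaryProduct (f i) (Pi.lift fun k : {k // k ≠ i} ↦ f k) := by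
  classical
  refine .of_exists_lift_of_hom_ext (fun T a b ↦ ?_) fun T s t hi hne ↦ ?_
  · let l (k : I) : T ⟶ A k :=
      if hk : k = i then a ≫ eqToHom (by rw [hk])
      else b ≫ Pi.π (fun k : {k // k ≠ i} ↦ A k) ⟨k, hk⟩
    have lift_f (k : I) : Fan.IsLimit.lift hf l ≫ f k = l k := Fan.IsLimit.fac hf l k
    refine ⟨Fan.IsLimit.lift hf l, by simp [lift_f, l], Pi.hom_ext _ _ fun ⟨k, hk⟩ ↦ ?_⟩
    simp [lift_f, l, hk]
  · refine Fan.IsLimit.hom_ext hf s t fun k ↦ ?_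
    rcases eq_or_ne k i with rfl | hk
    · exact hi
    · simpa using hne =≫ Pi.π (fun k : {k // k ≠ i} ↦ A k) ⟨k, hk⟩

theorem isBinaryProduct_piLift_piLift {J : Type*} {X : C} {B D E : J → C}
    [HasProduct D] [HasProduct E] {g : ∀ j, X ⟶ B j} (hg : IsLimit (Fan.mk X g))
    {β : ∀ j, B j ⟶ D j} {γ : ∀ j, B j ⟶ E j} (h : ∀ j, IsBinaryProduct (β j) (γ j)) :
    IsBinaryProduct (Pi.lift fun j ↦ g j ≫ β j) (Pi.lift fun j ↦ g j ≫ γ j) := by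
  refine .of_exists_lift_of_hom_ext (fun T d e ↦ ?_) fun T s t hβ hγ ↦ ?_
  · choose l lβ lγ using fun j ↦ (h j).exists_lift (d ≫ Pi.π D j) (e ≫ Pi.π E j)
    have lift_g (j : J) : Fan.IsLimit.lift hg l ≫ g j = l j := Fan.IsLimit.fac hg l j
    exact ⟨Fan.IsLimit.lift hg l,
      Pi.hom_ext _ _ fun j ↦ by simp [reassoc_of% lift_g, lβ],
      Pi.hom_ext _ _ fun j ↦ by simp [reassoc_of% lift_g, lγ]⟩
  · refine Fan.IsLimit.hom_ext hg s t fun j ↦ (h j).hom_ext ?_ ?_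
    · simpa using hβ =≫ Pi.π D j
    · simpa using hγ =≫ Pi.π E j

/-- Every object is covered, through a strong epimorphism, by an object that admits a morphism
to `X`. When `C` has binary products, this says that all projections `X ⨯ T ⟶ T` are strong
epimorphisms; it is the form of global support that makes sense without assuming `C` regular. -/
def HasStrongGlobalSupport (X : C) : Prop :=
  ∀ T : C, ∃ (P : C) (_ : P ⟶ X) (q : P ⟶ T), StrongEpi q

theorem IsRegularEpimorphism.strongEpi {X Y : C} {f : X ⟶ Y} (hf : IsRegularEpimorphism f) :
    StrongEpi f := by
  obtain ⟨W, a, b, w, ⟨hc⟩⟩ := hf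
  have : IsRegularEpi f := ⟨⟨⟨W, a, b, w, hc⟩⟩⟩
  infer_instance

theorem HasGlobalSupport.hasStrongGlobalSupport [HasFiniteLimits C] [IsRegularCategory C]
    {X : C} (hX : HasGlobalSupport X) : HasStrongGlobalSupport X := fun T ↦
  ⟨_, pullback.fst (terminal.from X) (terminal.from T), pullback.snd _ _,
    (IsRegularCategory.regularEpi_stable _ _ hX).strongEpi⟩

theorem HasStrongGlobalSupport.isIso_of_isBinaryProduct_comp {X A A' E E' : C}
    (hX : HasStrongGlobalSupport X) {f : X ⟶ A} {f' : X ⟶ A'} {φ : A ⟶ E} {φ' : A' ⟶ E'}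
    (hf : IsBinaryProduct f f') (hφ : IsBinaryProduct (f ≫ φ) (f' ≫ φ')) : IsIso φ := by
  have : Mono φ := by
    refine ⟨fun {T} s t hst ↦ ?_⟩
    obtain ⟨P, p, q, _⟩ := hX T
    obtain ⟨x, hx, hx'⟩ := hf.exists_lift (q ≫ s) (p ≫ f')
    obtain ⟨y, hy, hy'⟩ := hf.exists_lift (q ≫ t) (p ≫ f')
    have hxy : x = y := hφ.hom_ext
      (by simp only [reassoc_of% hx, reassoc_of% hy, hst])
      (by simp only [reassoc_of% hx', reassoc_of% hy'])
    rw [← cancel_epi q, ← hx, ← hy, hxy]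
  have : StrongEpi φ := by
    obtain ⟨P, p, q, _⟩ := hX E
    obtain ⟨x, hx, -⟩ := hφ.exists_lift q (p ≫ f' ≫ φ')
    have : StrongEpi ((x ≫ f) ≫ φ) := by rwa [Category.assoc, hx]
    exact strongEpi_of_strongEpi (x ≫ f) φ
  exact isIso_of_mono_of_strongEpi φ

theorem HasStrongGlobalSupport.isLimit_fan_of_isBinaryProduct {J : Type*} {X A A' : C}
    {B D E : J → C} [HasProduct D] [HasProduct E] (hX : HasStrongGlobalSupport X)
    {f : X ⟶ A} {f' : X ⟶ A'} {g : ∀ j, X ⟶ B j}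
    (hf : IsBinaryProduct f f') (hg : IsLimit (Fan.mk X g))
    {α : ∀ j, A ⟶ D j} {α' : ∀ j, A' ⟶ E j} {β : ∀ j, B j ⟶ D j} {β' : ∀ j, B j ⟶ E j}
    (hβ : ∀ j, IsBinaryProduct (β j) (β' j))
    (comm : ∀ j, f ≫ α j = g j ≫ β j) (comm' : ∀ j, f' ≫ α' j = g j ≫ β' j) :
    Nonempty (IsLimit (Fan.mk A α)) := by
  have fac : f ≫ Pi.lift α = Pi.lift fun j ↦ g j ≫ β j := Pi.hom_ext _ _ (by simp [comm])
  have fac' : f' ≫ Pi.lift α' = Pi.lift fun j ↦ g j ≫ β' j := Pi.hom_ext _ _ (by simp [comm'])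
  have prod : IsBinaryProduct (f ≫ Pi.lift α) (f' ≫ Pi.lift α') := by
    rw [fac, fac']
    exact isBinaryProduct_piLift_piLift hg hβ
  have iso : IsIso (Pi.lift α) := hX.isIso_of_isBinaryProduct_comp hf prod
  exact ⟨(limit.isLimit _).ofPointIso (i := iso)⟩

/-- The strict refinement property of `X` for product decompositions indexed by the fixed types
`I` and `J`; the finite strict refinement property is the case of all finite `I` and `J`. -/
def HasStrictRefinementFor (I J : Type*) (X : C) : Prop :=
  ∀ (A : I → C) (B : J → C) (f : ∀ i, X ⟶ A i) (g : ∀ j, X ⟶ B j),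
    Nonempty (IsLimit (Fan.mk X f)) → Nonempty (IsLimit (Fan.mk X g)) →
    ∃ (D : I → J → C) (α : ∀ i j, A i ⟶ D i j) (β : ∀ i j, B j ⟶ D i j),
      (∀ i j, f i ≫ α i j = g j ≫ β i j) ∧
      (∀ i, Nonempty (IsLimit (Fan.mk (A i) (fun j ↦ α i j)))) ∧
      (∀ j, Nonempty (IsLimit (Fan.mk (B j) (fun i ↦ β i j))))

theorem HasStrictRefinementFor.exists_isBinaryProduct {X A A' B B' : C}
    (hX : HasStrictRefinementFor Bool Bool X) {f : X ⟶ A} {f' : X ⟶ A'} {g : X ⟶ B}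
    {g' : X ⟶ B'} (hf : IsBinaryProduct f f') (hg : IsBinaryProduct g g') :
    ∃ (D E F : C) (α : A ⟶ D) (β : B ⟶ D) (α' : A' ⟶ E) (β' : B ⟶ E) (γ : A ⟶ F) (γ' : B' ⟶ F),
      f ≫ α = g ≫ β ∧ f' ≫ α' = g ≫ β' ∧ f ≫ γ = g' ≫ γ' ∧
      IsBinaryProduct α γ ∧ IsBinaryProduct β β' := by
  let P : Bool → C := Bool.rec A A'
  let Q : Bool → C := Bool.rec B B'
  let p : ∀ b, X ⟶ P b := Bool.rec f f'
  let q : ∀ b, X ⟶ Q b := Bool.rec g g'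
  obtain ⟨D, α, β, comm, hα, hβ⟩ := hX P Q p q
    ((isBinaryProduct_iff_isLimit_fan_bool p).1 hf) ((isBinaryProduct_iff_isLimit_fan_bool q).1 hg)
  exact ⟨D false false, D true false, D false true, α false false, β false false,
    α true false, β true false, α false true, β false true,
    comm false false, comm true false, comm false true,
    (isBinaryProduct_iff_isLimit_fan_bool _).2 (hα false),
    (isBinaryProduct_iff_isLimit_fan_bool _).2 (hβ false)⟩

theorem strictRefinement_of_finiteStrictRefinement_general [HasProducts.{w} C] {X : C}
    (hsupp : HasStrongGlobalSupport X) (hX : HasStrictRefinementFor Bool Bool X) (I J : Type w) :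
    HasStrictRefinementFor I J X := by
  rintro A B f g ⟨hf⟩ ⟨hg⟩
  have hf' := isBinaryProduct_proj_piLift_ne hf
  have hg' := isBinaryProduct_proj_piLift_ne hg
  choose D E F α β α' β' γ γ' comm commE commF hα hβ using fun i j ↦
    hX.exists_isBinaryProduct (hf' i) (hg' j)
  exact ⟨D, α, β, comm,
    fun i ↦ hsupp.isLimit_fan_of_isBinaryProduct (hf' i) hg (hβ i) (comm i) (commE i),
    fun j ↦ hsupp.isLimit_fan_of_isBinaryProduct (hg' j) hf (fun i ↦ hα i j)
      (fun i ↦ (comm i j).symm) fun i ↦ (commF i j).symm⟩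

/-- In a complete regular category, an object with global support which has the
finite strict refinement property has the strict refinement property for arbitrary
small families. -/
theorem strictRefinement_of_finiteStrictRefinement
    {C : Type u} [Category.{v} C] [HasLimits C] [IsRegularCategory C]
    (X : C) (hgs : HasGlobalSupport X) (hX : HasFiniteStrictRefinement X) :
    ∀ (I J : Type v) (A : I → C) (B : J → C)
      (f : ∀ i, X ⟶ A i) (g : ∀ j, X ⟶ B j),
      Nonempty (IsLimit (Fan.mk X f)) → Nonempty (IsLimit (Fan.mk X g)) →
      ∃ (D : I → J → C) (α : ∀ i j, A i ⟶ D i j) (β : ∀ i j, B j ⟶ D i j),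
        (∀ i j, f i ≫ α i j = g j ≫ β i j) ∧
        (∀ i, Nonempty (IsLimit (Fan.mk (A i) (fun j => α i j)))) ∧
        (∀ j, Nonempty (IsLimit (Fan.mk (B j) (fun i => β i j)))) :=
  strictRefinement_of_finiteStrictRefinement_general hgs.hasStrongGlobalSupport
    (hX Bool Bool inferInstance inferInstance)
end

section
/- Let C be a regular category and X an object with global support. If X is regularly-coextensive, then X is projection-coextensive. -/
open CategoryTheory CategoryTheory.Limits

universe v u

variable {C : Type u} [Category.{v} C]

/-!
The global support of `X` is inherited by every object `B` that receives a morphism from `X`. Any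
product projection out of such an object is a base change of some `B ⟶ ⊤_ C` with `B` of this
kind, hence a regular epimorphism. So both conditions of projection-coextensivity concern instances
of the conditions of regular coextensivity, and what has to be added is that the pushout legs are
again product projections: pushing out both projections of a product diagram on `X` along the same
regular epimorphism yields a product diagram.
-/

theorem isRegularEpimorphism_iff_isRegularEpi {X Y : C} {f : X ⟶ Y} :
    IsRegularEpimorphism f ↔ IsRegularEpi f :=
  ⟨fun ⟨W, a, b, w, ⟨hf⟩⟩ => ⟨⟨⟨W, a, b, w, hf⟩⟩⟩,
    fun ⟨⟨W, a, b, w, hf⟩⟩ => ⟨W, a, b, w, ⟨hf⟩⟩⟩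

instance isStableUnderBaseChange_regularEpi [HasFiniteLimits C] [IsRegularCategory C] :
    (MorphismProperty.regularEpi C).IsStableUnderBaseChange :=
  .of_forall_exists_isPullback fun f g _ hg =>
    ⟨pullback g f, pullback.snd g f, pullback.fst g f, (IsPullback.of_hasPullback g f).flip,
      isRegularEpimorphism_iff_isRegularEpi.1 <|
        IsRegularCategory.regularEpi_stable g f (isRegularEpimorphism_iff_isRegularEpi.2 hg)⟩

theorem isRegularEpi_of_comp_of_epi {X Y Z P : C} (f : X ⟶ Y) (g : Y ⟶ Z) [HasPullback g g]
    [IsRegularEpi (f ≫ g)] (a : P ⟶ X) (b : P ⟶ Y) [Epi b] (w : a ≫ f ≫ g = b ≫ g) :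
    IsRegularEpi g := by
  have : Epi (f ≫ g) := (IsRegularEpi.getStruct (f ≫ g)).epi
  have : Epi g := epi_of_epi f g
  refine .of_epi_of_exists fun D k hk => ?_
  have comp_eq {T : C} {x y : T ⟶ Y} (hxy : x ≫ g = y ≫ g) : x ≫ k = y ≫ k := by
    simpa only [pullback.lift_fst_assoc, pullback.lift_snd_assoc] using
      pullback.lift x y hxy ≫= hk
  let d : Z ⟶ D := IsRegularEpi.desc (f ≫ g) (f ≫ k) <| by
    simpa only [Category.assoc] using
      comp_eq (x := IsRegularEpi.left (f ≫ g) ≫ f) (y := IsRegularEpi.right (f ≫ g) ≫ f)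
        (by simpa only [Category.assoc] using IsRegularEpi.w (f ≫ g))
  refine ⟨d, (cancel_epi b).1 ?_⟩
  calc b ≫ g ≫ d = a ≫ (f ≫ g) ≫ d := by simp only [← Category.assoc, ← w]
    _ = (a ≫ f) ≫ k := by rw [IsRegularEpi.fac, Category.assoc]
    _ = b ≫ k := comp_eq (by rw [Category.assoc, w])

theorem IsBinaryProduct.symm {X A B : C} {p : X ⟶ A} {q : X ⟶ B} (h : IsBinaryProduct p q) :
    IsBinaryProduct q p :=
  h.map BinaryFan.isLimitFlip

theorem IsBinaryProduct.isProductProjection_fst {X A B : C} {p : X ⟶ A} {q : X ⟶ B}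
    (h : IsBinaryProduct p q) : IsProductProjection p :=
  ⟨B, q, h⟩

theorem IsBinaryProduct.isProductProjection_snd {X A B : C} {p : X ⟶ A} {q : X ⟶ B}
    (h : IsBinaryProduct p q) : IsProductProjection q :=
  h.symm.isProductProjection_fst

section GlobalSupport

variable [HasFiniteProducts C] [(MorphismProperty.regularEpi C).IsStableUnderBaseChange]

theorem HasGlobalSupport.of_hom {X B : C} (hX : HasGlobalSupport X) (h : X ⟶ B) :
    HasGlobalSupport B := by
  have : IsRegularEpi (h ≫ terminal.from B) := by
    simpa only [terminal.comp_from] using isRegularEpimorphism_iff_isRegularEpi.1 hX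
  have : HasPullback (terminal.from B) (terminal.from B) :=
    (IsPullback.of_hasBinaryProduct' B B).hasPullback
  have : IsRegularEpi (prod.snd : X ⨯ B ⟶ B) :=
    MorphismProperty.of_isPullback (P := .regularEpi C) (IsPullback.of_hasBinaryProduct' X B)
      (isRegularEpimorphism_iff_isRegularEpi.1 hX)
  have : Epi (prod.snd : X ⨯ B ⟶ B) := (IsRegularEpi.getStruct _).epi
  exact isRegularEpimorphism_iff_isRegularEpi.2 <|
    isRegularEpi_of_comp_of_epi h (terminal.from B) prod.fst prod.snd (Subsingleton.elim _ _)

theorem IsProductProjection.isRegularEpimorphism {X A : C} {p : X ⟶ A}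
    (hp : IsProductProjection p) (hX : HasGlobalSupport X) : IsRegularEpimorphism p := by
  obtain ⟨B, q, ⟨hpq⟩⟩ := hp
  have hB : IsRegularEpi (terminal.from B) :=
    isRegularEpimorphism_iff_isRegularEpi.1 (hX.of_hom q)
  exact isRegularEpimorphism_iff_isRegularEpi.2 <|
    MorphismProperty.of_isPullback (P := .regularEpi C)
      (IsPullback.of_is_product' hpq terminalIsTerminal).flip hB

end GlobalSupport

namespace MCoextensive

variable {M : MorphismProperty C} {X : C}

theorem isProductProjection_of_isMPushout (hX : MCoextensive M X) {Y A P : C} {m : X ⟶ Y}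
    {p : X ⟶ A} {a : A ⟶ P} {b : Y ⟶ P} (hm : M m) (hp : IsProductProjection p)
    (h : IsMPushout M p m a b) : IsProductProjection b := by
  obtain ⟨A', p', hpp'⟩ := hp
  obtain ⟨P', a', b', h'⟩ := hX.pushout_exists m p' hm hpp'.isProductProjection_snd
  have hbb' : IsBinaryProduct b b' :=
    (hX.isBinaryProduct_iff p p' m a a' b b' hpp' hm h.2.1 h'.2.1 h.1.w h'.1.w).2 ⟨h, h'⟩
  exact hbb'.isProductProjection_fst

theorem projectionCoextensive (hX : MCoextensive M X)
    (hM : ∀ ⦃Y A : C⦄ (_ : X ⟶ Y) (p : Y ⟶ A), IsProductProjection p → M p) :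
    ProjectionCoextensive X where
  pushout_exists Y A m p hm hp := by
    have hMm : M m := hM (𝟙 X) m hm
    have hMp : M p := hM (𝟙 X) p hp
    obtain ⟨P, a, b, hpush, ha, hb⟩ := hX.pushout_exists m p hMm hp
    exact ⟨P, a, b, hpush,
      hX.isProductProjection_of_isMPushout hMp hm ⟨hpush.flip, hb, ha⟩,
      hX.isProductProjection_of_isMPushout hMm hp ⟨hpush, ha, hb⟩⟩
  isBinaryProduct_iff A₁ A₂ Y B₁ B₂ π₁ π₂ f p₁ p₂ π₁' π₂' hπ hf hp₁ hp₂ w₁ w₂ := by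
    have hMp₁ : M p₁ := hM π₁ p₁ hp₁
    have hMp₂ : M p₂ := hM π₂ p₂ hp₂
    have product_iff :=
      hX.isBinaryProduct_iff π₁ π₂ f p₁ p₂ π₁' π₂' hπ (hM (𝟙 X) f hf) hMp₁ hMp₂ w₁ w₂
    constructor
    · intro hπ'
      obtain ⟨⟨hpush₁, -⟩, ⟨hpush₂, -⟩⟩ := product_iff.1 hπ'
      exact ⟨⟨hpush₁, hp₁, hπ'.isProductProjection_fst⟩,
        ⟨hpush₂, hp₂, hπ'.isProductProjection_snd⟩⟩
    · rintro ⟨⟨hpush₁, -, hπ₁'⟩, ⟨hpush₂, -, hπ₂'⟩⟩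
      exact product_iff.2
        ⟨⟨hpush₁, hMp₁, hM f π₁' hπ₁'⟩, ⟨hpush₂, hMp₂, hM f π₂' hπ₂'⟩⟩

end MCoextensive

theorem projectionCoextensive_of_regularlyCoextensive_general [HasFiniteProducts C]
    [(MorphismProperty.regularEpi C).IsStableUnderBaseChange] (X : C) (hgs : HasGlobalSupport X)
    (hX : RegularlyCoextensive X) : ProjectionCoextensive X :=
  MCoextensive.projectionCoextensive hX fun _ _ h _ hp => hp.isRegularEpimorphism (hgs.of_hom h)

/-- In a regular category, a regularly-coextensive object with global support is
projection-coextensive. -/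
theorem projectionCoextensive_of_regularlyCoextensive
    {C : Type u} [Category.{v} C] [HasFiniteLimits C] [IsRegularCategory C]
    (X : C) (hgs : HasGlobalSupport X) (hX : RegularlyCoextensive X) :
    ProjectionCoextensive X :=
  projectionCoextensive_of_regularlyCoextensive_general X hgs hX
end
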